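/- Fix a positive integer n. Then there are only finitely many convex lattice polytopes in ℝ² containing exactly n lattice points, up to affine unimodular equivalence: there exists a finite collection 𝒮 of convex lattice polytopes such that every convex lattice polytope P ⊂ ℝ² with exactly n points of ℤ² lying in P is equal to f(P') for some P' ∈ 𝒮 and some map f : ℝ² → ℝ² of the form f(x) = Ax + b with A ∈ GL₂(ℤ) and b ∈ ℤ². -/

import Mathlib

/-- The coercion of an integer lattice point of `ℤ²` to `ℝ²`. -/
def toR2 (v : Fin 2 → ℤ) : Fin 2 → ℝ := fun i => (v i : ℝ)

/-- A convex lattice polytope in `ℝ²`: the convex hull of a nonempty finite set of points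
of `ℤ²`. -/
def IsConvexLatticePolytope (P : Set (Fin 2 → ℝ)) : Prop :=
  ∃ S : Finset (Fin 2 → ℤ), S.Nonempty ∧ P = convexHull ℝ (toR2 '' (S : Set (Fin 2 → ℤ)))

/-- The affine map `ℝ² → ℝ²` given by `x ↦ A x + b`, for an integer matrix `A` and an
integer vector `b`. -/
def unimodMap (A : Matrix (Fin 2) (Fin 2) ℤ) (b : Fin 2 → ℤ) (x : Fin 2 → ℝ) : Fin 2 → ℝ :=
  (A.map (Int.cast : ℤ → ℝ)).mulVec x + toR2 b

/-- Orientation determinant of three lattice points. -/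
def orient (a b c : Fin 2 → ℤ) : ℤ :=
  (b 0 - a 0) * (c 1 - a 1) - (b 1 - a 1) * (c 0 - a 0)

/-- `q` lies in the positively oriented triangle `a b c`. -/
def InTri (a b c q : Fin 2 → ℤ) : Prop :=
  0 ≤ orient q b c ∧ 0 ≤ orient q c a ∧ 0 ≤ orient q a b

lemma orient_cyc (a b c : Fin 2 → ℤ) : orient b c a = orient a b c := by
  unfold orient; ring

lemma orient_sum (a b c q : Fin 2 → ℤ) :
    orient q b c + orient q c a + orient q a b = orient a b c := by
  unfold orient; ring

lemma orient_comb (a b c q : Fin 2 → ℤ) (i : Fin 2) :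
    orient a b c * q i = orient q b c * a i + orient q c a * b i + orient q a b * c i := by
  fin_cases i <;> simp [orient] <;> ring

/-- A triangle of normalized area at least 2 contains a lattice point besides its vertices. -/
lemma exists_extra (a b c : Fin 2 → ℤ) (h : 2 ≤ orient a b c) :
    ∃ q, InTri a b c q ∧ q ≠ a ∧ q ≠ b ∧ q ≠ c := by
  set D := orient a b c with hD
  -- a vector `w` outside the sublattice
  have hw : ∃ w0 w1 : ℤ,
      ¬ (D ∣ (w0 * (c 1 - a 1) - w1 * (c 0 - a 0)) ∧
         D ∣ ((b 0 - a 0) * w1 - (b 1 - a 1) * w0)) := by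
    by_contra hcon
    push Not at hcon
    obtain ⟨⟨s0, h1⟩, ⟨t0, h2⟩⟩ := hcon 1 0
    obtain ⟨⟨s1, h3⟩, ⟨t1, h4⟩⟩ := hcon 0 1
    have h5 : D = D * (D * (s0 * t1 - s1 * t0)) := by
      have : D * (D * (s0 * t1 - s1 * t0)) = (D * s0) * (D * t1) - (D * s1) * (D * t0) := by ring
      rw [this, ← h1, ← h2, ← h3, ← h4, hD]; unfold orient; ring
    have h6 : 1 = D * (s0 * t1 - s1 * t0) := by
      have h0 : D ≠ 0 := by omega
      apply mul_left_cancel₀ h0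
      linarith
    have h7 : D ∣ 1 := ⟨_, h6⟩
    have := Int.le_of_dvd one_pos h7
    omega
  obtain ⟨w0, w1, hw⟩ := hw
  set s := w0 * (c 1 - a 1) - w1 * (c 0 - a 0) with hs
  set t := (b 0 - a 0) * w1 - (b 1 - a 1) * w0 with ht
  have hDp : 0 < D := by omega
  have s1 := Int.emod_nonneg s hDp.ne'
  have s2 := Int.emod_lt_of_pos s hDp
  have t1 := Int.emod_nonneg t hDp.ne'
  have t2 := Int.emod_lt_of_pos t hDp
  have s3 := Int.emod_add_mul_ediv s D
  have t3 := Int.emod_add_mul_ediv t D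
  have hne : ¬ (s % D = 0 ∧ t % D = 0) := fun hh =>
    hw ⟨Int.dvd_of_emod_eq_zero hh.1, Int.dvd_of_emod_eq_zero hh.2⟩
  generalize s % D = s' at *
  generalize t % D = t' at *
  generalize s / D = m at *
  generalize t / D = k at *
  have gen : ∀ q : Fin 2 → ℤ, InTri a b c q → orient q c a < D → orient q a b < D →
      ¬ (orient q c a = 0 ∧ orient q a b = 0) → ∃ q, InTri a b c q ∧ q ≠ a ∧ q ≠ b ∧ q ≠ c := by
    intro q hq h1 h2 h3
    refine ⟨q, hq, ?_, ?_, ?_⟩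
    · rintro rfl
      apply h3
      constructor <;> unfold orient <;> ring
    · rintro rfl
      rw [orient_cyc] at h1
      exact lt_irrefl _ h1
    · rintro rfl
      rw [← orient_cyc] at h2
      rw [hD, ← orient_cyc, ← orient_cyc] at h2
      rw [orient_cyc] at h2
      exact lt_irrefl _ h2
  by_cases hle : s' + t' ≤ D
  · have e1 : orient ![a 0 + w0 - m * (b 0 - a 0) - k * (c 0 - a 0),
        a 1 + w1 - m * (b 1 - a 1) - k * (c 1 - a 1)] c a = s' := by
      have : s' = s - D * m := by linarith
      rw [this, hs, hD]; simp [orient]; ring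
    have e2 : orient ![a 0 + w0 - m * (b 0 - a 0) - k * (c 0 - a 0),
        a 1 + w1 - m * (b 1 - a 1) - k * (c 1 - a 1)] a b = t' := by
      have : t' = t - D * k := by linarith
      rw [this, ht, hD]; simp [orient]; ring
    have e3 := orient_sum a b c ![a 0 + w0 - m * (b 0 - a 0) - k * (c 0 - a 0),
        a 1 + w1 - m * (b 1 - a 1) - k * (c 1 - a 1)]
    refine gen ![a 0 + w0 - m * (b 0 - a 0) - k * (c 0 - a 0),
        a 1 + w1 - m * (b 1 - a 1) - k * (c 1 - a 1)] ⟨?_, ?_, ?_⟩ ?_ ?_ ?_ <;> omega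
  · have e1 : orient ![a 0 - (w0 - (m + 1) * (b 0 - a 0) - (k + 1) * (c 0 - a 0)),
        a 1 - (w1 - (m + 1) * (b 1 - a 1) - (k + 1) * (c 1 - a 1))] c a = D - s' := by
      have : s' = s - D * m := by linarith
      rw [this, hs, hD]; simp [orient]; ring
    have e2 : orient ![a 0 - (w0 - (m + 1) * (b 0 - a 0) - (k + 1) * (c 0 - a 0)),
        a 1 - (w1 - (m + 1) * (b 1 - a 1) - (k + 1) * (c 1 - a 1))] a b = D - t' := by
      have : t' = t - D * k := by linarith
      rw [this, ht, hD]; simp [orient]; ring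
    have e3 := orient_sum a b c
      ![a 0 - (w0 - (m + 1) * (b 0 - a 0) - (k + 1) * (c 0 - a 0)),
        a 1 - (w1 - (m + 1) * (b 1 - a 1) - (k + 1) * (c 1 - a 1))]
    refine gen ![a 0 - (w0 - (m + 1) * (b 0 - a 0) - (k + 1) * (c 0 - a 0)),
        a 1 - (w1 - (m + 1) * (b 1 - a 1) - (k + 1) * (c 1 - a 1))] ⟨?_, ?_, ?_⟩ ?_ ?_ ?_ <;> omega

lemma eq_of_orient_zero (a b c p : Fin 2 → ℤ) (h : 0 < orient a b c)
    (h1 : orient p c a = 0) (h2 : orient p a b = 0) : p = a := by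
  have h3 := orient_sum a b c p
  ext i
  have h4 := orient_comb a b c p i
  rw [h1, h2] at h4 h3
  have : orient p b c = orient a b c := by linarith
  rw [this] at h4
  apply mul_left_cancel₀ h.ne'
  linarith

/-- Replacing the vertex `a` by a point `p` of the triangle shrinks it and loses `a`. -/
lemma sub_tri (a b c p : Fin 2 → ℤ) (h : 0 < orient a b c) (hp : InTri a b c p) (hpa : p ≠ a)
    (h' : 0 < orient p b c) (q : Fin 2 → ℤ) (hq : InTri p b c q) :
    InTri a b c q ∧ q ≠ a := by
  obtain ⟨p1, p2, p3⟩ := hp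
  obtain ⟨q1, q2, q3⟩ := hq
  constructor
  · refine ⟨q1, ?_, ?_⟩
    · have e : orient p b c * orient q c a
          = orient q b c * orient p c a + orient q c p * orient a b c := by
        unfold orient; ring
      have : 0 ≤ orient p b c * orient q c a := by rw [e]; positivity
      exact nonneg_of_mul_nonneg_right this h'
    · have e : orient p b c * orient q a b
          = orient q b c * orient p a b + orient q p b * orient a b c := by
        unfold orient; ring
      have : 0 ≤ orient p b c * orient q a b := by rw [e]; positivity
      exact nonneg_of_mul_nonneg_right this h'
  · rintro rfl
    have e1 := orient_sum p b c q
    have e2 := orient_sum q b c p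
    exact hpa (eq_of_orient_zero q b c p h (by omega) (by omega))

lemma InTri.rot {a b c q : Fin 2 → ℤ} (h : InTri a b c q) : InTri b c a q :=
  ⟨h.2.1, h.2.2, h.1⟩

lemma area_bound (m : ℕ) : ∀ (a b c : Fin 2 → ℤ) (L : Finset (Fin 2 → ℤ)),
    (∀ q, InTri a b c q → q ∈ L) → L.card ≤ m → orient a b c ≤ 3 ^ m := by
  induction m with
  | zero =>
    intro a b c L hL hc
    by_contra hcon
    have hpos : 0 < orient a b c := by
      have : (0 : ℤ) < 3 ^ 0 := by positivity
      omega
    have ha : a ∈ L := hL a ⟨hpos.le, by simp [orient], by simp [orient]⟩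
    have := Finset.card_pos.2 ⟨a, ha⟩
    omega
  | succ m ih =>
    intro a b c L hL hc
    have hK : (0 : ℤ) < 3 ^ m := by positivity
    by_cases h2 : 2 ≤ orient a b c
    · obtain ⟨p, hp, pa, pb, pc⟩ := exists_extra a b c h2
      have step : ∀ a b c : Fin 2 → ℤ, 2 ≤ orient a b c → (∀ q, InTri a b c q → q ∈ L) →
          InTri a b c p → p ≠ a → orient p b c ≤ 3 ^ m := by
        intro a b c h2 hL hp hpa
        by_cases h0 : 0 < orient p b c
        · have ha : a ∈ L := hL a ⟨by omega, by simp [orient], by simp [orient]⟩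
          refine ih p b c (L.erase a) ?_ ?_
          · intro q hq
            have := sub_tri a b c p (by omega) hp hpa h0 q hq
            exact Finset.mem_erase.2 ⟨this.2, hL q this.1⟩
          · rw [Finset.card_erase_of_mem ha]; omega
        · omega
      have r1 := step a b c h2 hL hp pa
      have r2 := step b c a (by rw [orient_cyc]; exact h2) (fun q hq => hL q hq.rot.rot) hp.rot pb
      have r3 := step c a b (by rw [orient_cyc, orient_cyc]; exact h2)
        (fun q hq => hL q hq.rot) hp.rot.rot pc
      have := orient_sum a b c p
      rw [pow_succ]; omega
    · rw [pow_succ]; omega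

/-- Closure of a set of lattice points under lattice points of triangles. -/
def LatConv (L : Finset (Fin 2 → ℤ)) : Prop :=
  ∀ a ∈ L, ∀ b ∈ L, ∀ c ∈ L, ∀ d1 d2 d3 : ℤ, 0 ≤ d1 → 0 ≤ d2 → 0 ≤ d3 → 0 < d1 + d2 + d3 →
    ∀ q : Fin 2 → ℤ, (∀ i, (d1 + d2 + d3) * q i = d1 * a i + d2 * b i + d3 * c i) → q ∈ L

lemma prim_basis (u0 u1 : ℤ) (h : ¬ (u0 = 0 ∧ u1 = 0)) :
    ∃ g α γ x y : ℤ, 0 < g ∧ u0 = g * α ∧ u1 = g * γ ∧ α * x + γ * y = 1 := by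
  have hg : 0 < (Int.gcd u0 u1 : ℤ) := by
    have : Int.gcd u0 u1 ≠ 0 := by rw [Ne, Int.gcd_eq_zero_iff]; exact h
    omega
  obtain ⟨α, hα⟩ := Int.gcd_dvd_left u0 u1
  obtain ⟨γ, hγ⟩ := Int.gcd_dvd_right u0 u1
  refine ⟨Int.gcd u0 u1, α, γ, Int.gcdA u0 u1, Int.gcdB u0 u1, hg, hα, hγ, ?_⟩
  have hb := Int.gcd_eq_gcd_ab u0 u1
  generalize Int.gcdA u0 u1 = x at *
  generalize Int.gcdB u0 u1 = y at *
  generalize (Int.gcd u0 u1 : ℤ) = g at *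
  apply mul_left_cancel₀ hg.ne'
  rw [mul_one]
  calc g * (α * x + γ * y) = (g * α) * x + (g * γ) * y := by ring
    _ = u0 * x + u1 * y := by rw [← hα, ← hγ]
    _ = g := hb.symm

/-- Degenerate case: the points lie on one line. -/
lemma line_case (L : Finset (Fin 2 → ℤ)) (hL : LatConv L) (a : Fin 2 → ℤ) (ha : a ∈ L)
    (u0 u1 : ℤ) (hu : ¬ (u0 = 0 ∧ u1 = 0))
    (hcol : ∀ p ∈ L, u0 * (p 1 - a 1) - u1 * (p 0 - a 0) = 0) :
    ∃ α β γ δ : ℤ, α * δ - β * γ = 1 ∧ ∀ p ∈ L, ∃ X Y : ℤ, |X| ≤ L.card ∧ Y = 0 ∧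
      p 0 = α * X + β * Y + a 0 ∧ p 1 = γ * X + δ * Y + a 1 := by
  obtain ⟨g, α, γ, x, y, hg, h0, h1, hb⟩ := prim_basis u0 u1 hu
  refine ⟨α, -y, γ, x, by linarith, ?_⟩
  intro p hp
  have hc := hcol p hp
  have hc' : α * (p 1 - a 1) - γ * (p 0 - a 0) = 0 := by
    apply mul_left_cancel₀ hg.ne'
    rw [h0, h1] at hc; linarith
  set X := x * (p 0 - a 0) + y * (p 1 - a 1) with hX
  have e0 : p 0 = α * X + a 0 := by
    rw [hX]; linear_combination (-(p 0 - a 0)) * hb - y * hc'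
  have e1 : p 1 = γ * X + a 1 := by
    rw [hX]; linear_combination (-(p 1 - a 1)) * hb + x * hc'
  refine ⟨X, 0, ?_, rfl, by linarith, by linarith⟩
  have hinj : Function.Injective (fun i : ℤ => (![α * i + a 0, γ * i + a 1] : Fin 2 → ℤ)) := by
    intro i j hij
    have i0 := congrFun hij 0
    have i1 := congrFun hij 1
    simp only [Matrix.cons_val_zero, Matrix.cons_val_one] at i0 i1
    linear_combination x * i0 + y * i1 - (i - j) * hb
  by_cases hX0 : 0 < X
  · have hsub : (Finset.Icc 1 X).image (fun i : ℤ => (![α * i + a 0, γ * i + a 1] : Fin 2 → ℤ))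
        ⊆ L := by
      intro q hq
      obtain ⟨i, hi, rfl⟩ := Finset.mem_image.1 hq
      rw [Finset.mem_Icc] at hi
      refine hL a ha p hp p hp (X - i) i 0 (by omega) (by omega) le_rfl (by omega) _ ?_
      intro j
      fin_cases j
      · simp [e0]; ring
      · simp [e1]; ring
    have := Finset.card_le_card hsub
    rw [Finset.card_image_of_injective _ hinj, Int.card_Icc] at this
    rw [abs_of_pos hX0]; omega
  · by_cases hX1 : X = 0
    · rw [hX1]; simp
    have hsub : (Finset.Icc X (-1)).image
        (fun i : ℤ => (![α * i + a 0, γ * i + a 1] : Fin 2 → ℤ)) ⊆ L := by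
      intro q hq
      obtain ⟨i, hi, rfl⟩ := Finset.mem_image.1 hq
      rw [Finset.mem_Icc] at hi
      refine hL a ha p hp p hp (i - X) (-i) 0 (by omega) (by omega) le_rfl (by omega) _ ?_
      intro j
      fin_cases j
      · simp [e0]; ring
      · simp [e1]; ring
    have := Finset.card_le_card hsub
    rw [Finset.card_image_of_injective _ hinj, Int.card_Icc] at this
    rw [abs_of_neg (by omega)]; omega

set_option maxHeartbeats 1000000 in
lemma reduce (L : Finset (Fin 2 → ℤ)) (hne : L.Nonempty) (hL : LatConv L) :
    ∃ (α β γ δ : ℤ) (a : Fin 2 → ℤ), α * δ - β * γ = 1 ∧ ∀ p ∈ L, ∃ X Y : ℤ,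
      |X| ≤ 3 ^ L.card + 3 ^ L.card * 3 ^ L.card ∧
      |Y| ≤ 3 ^ L.card + 3 ^ L.card * 3 ^ L.card ∧
      p 0 = α * X + β * Y + a 0 ∧ p 1 = γ * X + δ * Y + a 1 := by
  have hK : (0 : ℤ) < 3 ^ L.card := by positivity
  have hcK : (L.card : ℤ) ≤ 3 ^ L.card := by
    exact_mod_cast (Nat.lt_pow_self (by norm_num : 1 < 3)).le
  obtain ⟨⟨a, b, c⟩, habc, hmax⟩ := Finset.exists_max_image (L ×ˢ L ×ˢ L)
    (fun t => orient t.1 t.2.1 t.2.2) (by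
      obtain ⟨x, hx⟩ := hne
      exact ⟨(x, x, x), by simp [hx]⟩)
  simp only [Finset.mem_product] at habc
  obtain ⟨ha, hb, hc⟩ := habc
  have hmx : ∀ x ∈ L, ∀ y ∈ L, ∀ z ∈ L, orient x y z ≤ orient a b c := fun x hx y hy z hz =>
    hmax (x, y, z) (by simp [hx, hy, hz])
  by_cases hD : 0 < orient a b c
  · have hDK : orient a b c ≤ 3 ^ L.card := by
      refine area_bound _ a b c L ?_ le_rfl
      intro q hq
      refine hL a ha b hb c hc _ _ _ hq.1 hq.2.1 hq.2.2 ?_ q ?_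
      · rw [orient_sum]; exact hD
      · intro i; rw [orient_sum]; exact orient_comb a b c q i
    generalize (3 : ℤ) ^ L.card = K at *
    have hu : ¬ (b 0 - a 0 = 0 ∧ b 1 - a 1 = 0) := by
      rintro ⟨h0, h1⟩
      unfold orient at hD
      rw [h0, h1] at hD
      simp at hD
    obtain ⟨g, α, γ, x, y, hg, h0, h1, hbz⟩ := prim_basis _ _ hu
    set k := α * (c 1 - a 1) - γ * (c 0 - a 0) with hk
    have hgk : orient a b c = g * k := by
      unfold orient; rw [h0, h1, hk]; ring
    have hkp : 0 < k := by
      rw [hgk] at hD; exact pos_of_mul_pos_right hD hg.le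
    set h0' := x * (c 0 - a 0) + y * (c 1 - a 1) with hh0
    set m := h0' / k with hm
    have s1 := Int.emod_nonneg h0' hkp.ne'
    have s2 := Int.emod_lt_of_pos h0' hkp
    have s3 := Int.emod_add_mul_ediv h0' k
    rw [← hm] at s3
    generalize h0' % k = r at *
    clear_value m
    refine ⟨α, -y + m * α, γ, x + m * γ, a, by linear_combination hbz, ?_⟩
    intro p hp
    refine ⟨(x + m * γ) * (p 0 - a 0) - (-y + m * α) * (p 1 - a 1),
      α * (p 1 - a 1) - γ * (p 0 - a 0), ?_, ?_, ?_, ?_⟩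
    · set X := (x + m * γ) * (p 0 - a 0) - (-y + m * α) * (p 1 - a 1) with hX
      set Y := α * (p 1 - a 1) - γ * (p 0 - a 0) with hY
      have e : orient a p c = X * k - Y * r := by
        have hr : r = h0' - k * m := by linarith
        rw [hr, hX, hY, hk, hh0]; unfold orient
        linear_combination (-((p 0 - a 0) * (c 1 - a 1) - (p 1 - a 1) * (c 0 - a 0))) * hbz
      have e' : orient a b p = g * Y := by
        unfold orient; rw [h0, h1, hY]; ring
      have b1 := hmx a ha p hp c hc
      have b2 := hmx p hp a ha c hc
      have b2' : orient p a c = - orient a p c := by unfold orient; ring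
      have b3 := hmx a ha b hb p hp
      have b4 := hmx b hb a ha p hp
      have b4' : orient b a p = - orient a b p := by unfold orient; ring
      have hgY : |g * Y| ≤ K := by rw [abs_le]; constructor <;> linarith
      have hYK : |Y| ≤ K := by
        rw [abs_mul, abs_of_pos hg] at hgY
        exact (le_mul_of_one_le_left (abs_nonneg Y) hg).trans hgY
      have hkK : k ≤ K := (le_mul_of_one_le_left hkp.le hg).trans (hgk ▸ hDK)
      have hrK : |Y * r| ≤ K * K := by
        rw [abs_mul, abs_of_nonneg s1]
        exact mul_le_mul hYK (by linarith) s1 hK.le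
      have hXk : |X * k| ≤ K + K * K := by
        have := abs_le.1 hrK
        rw [abs_le]; constructor <;> linarith
      rw [abs_mul, abs_of_pos hkp] at hXk
      exact (le_mul_of_one_le_right (abs_nonneg X) hkp).trans hXk
    · set Y := α * (p 1 - a 1) - γ * (p 0 - a 0) with hY
      have e' : orient a b p = g * Y := by
        unfold orient; rw [h0, h1, hY]; ring
      have b3 := hmx a ha b hb p hp
      have b4 := hmx b hb a ha p hp
      have b4' : orient b a p = - orient a b p := by unfold orient; ring
      have hgY : |g * Y| ≤ K := by rw [abs_le]; constructor <;> linarith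
      rw [abs_mul, abs_of_pos hg] at hgY
      have hYK := (le_mul_of_one_le_left (abs_nonneg Y) hg).trans hgY
      exact hYK.trans (le_add_of_nonneg_right (mul_nonneg hK.le hK.le))
    · linear_combination (-(p 0 - a 0)) * hbz
    · linear_combination (-(p 1 - a 1)) * hbz
  · have hz : ∀ y ∈ L, ∀ z ∈ L, orient a y z = 0 := by
      intro y hy z hz
      have b1 := hmx a ha y hy z hz
      have b2 := hmx a ha z hz y hy
      have b3 : orient a z y = - orient a y z := by unfold orient; ring
      omega
    have hu : ∃ u0 u1 : ℤ, ¬ (u0 = 0 ∧ u1 = 0) ∧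
        ∀ p ∈ L, u0 * (p 1 - a 1) - u1 * (p 0 - a 0) = 0 := by
      by_cases hex : ∃ y ∈ L, y ≠ a
      · obtain ⟨y, hy, hya⟩ := hex
        refine ⟨y 0 - a 0, y 1 - a 1, ?_, fun p hp => hz y hy p hp⟩
        rintro ⟨z0, z1⟩
        apply hya
        ext i
        fin_cases i
        · show y 0 = a 0
          omega
        · show y 1 = a 1
          omega
      · push Not at hex
        refine ⟨1, 0, by simp, fun p hp => ?_⟩
        rw [hex p hp]; simp
    obtain ⟨u0, u1, hu, hcol⟩ := hu
    obtain ⟨α, β, γ, δ, hdet, hp⟩ := line_case L hL a ha u0 u1 hu hcol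
    refine ⟨α, β, γ, δ, a, hdet, fun p hpL => ?_⟩
    obtain ⟨X, Y, hX, hY, e0, e1⟩ := hp p hpL
    have : (0 : ℤ) < 3 ^ L.card * 3 ^ L.card := by positivity
    exact ⟨X, Y, by linarith, by rw [hY]; simp; linarith, e0, e1⟩

lemma unimodMap_toR2 (A : Matrix (Fin 2) (Fin 2) ℤ) (b q : Fin 2 → ℤ) :
    unimodMap A b (toR2 q) = toR2 (A.mulVec q + b) := by
  ext i
  fin_cases i <;> simp [unimodMap, toR2]

lemma unimodMap_image_hull (A : Matrix (Fin 2) (Fin 2) ℤ) (b : Fin 2 → ℤ)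
    (s : Set (Fin 2 → ℝ)) :
    unimodMap A b '' convexHull ℝ s = convexHull ℝ (unimodMap A b '' s) := by
  have h : unimodMap A b =
      ⇑((Matrix.mulVecLin (A.map (Int.cast : ℤ → ℝ))).toAffineMap +
        AffineMap.const ℝ (Fin 2 → ℝ) (toR2 b)) := by
    ext x i
    simp [unimodMap]
  rw [h]
  exact AffineMap.image_convexHull _ _

lemma latConv_of_convex (P : Set (Fin 2 → ℝ)) (hP : Convex ℝ P) (L : Finset (Fin 2 → ℤ))
    (hL : ∀ q, q ∈ L ↔ toR2 q ∈ P) : LatConv L := by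
  intro a ha b hb c hc d1 d2 d3 h1 h2 h3 hs q hq
  rw [hL] at *
  have hs' : (0 : ℝ) < d1 + d2 + d3 := by exact_mod_cast hs
  have e : toR2 q = ((d1 : ℝ) / (d1 + d2 + d3)) • toR2 a + ((d2 : ℝ) / (d1 + d2 + d3)) • toR2 b
      + ((d3 : ℝ) / (d1 + d2 + d3)) • toR2 c := by
    ext i
    have := hq i
    have h' : ((d1 : ℝ) + d2 + d3) * q i = d1 * a i + d2 * b i + d3 * c i := by exact_mod_cast this
    simp only [toR2, Pi.add_apply, Pi.smul_apply, smul_eq_mul]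
    field_simp
    linarith
  have g1 : (0 : ℝ) ≤ d1 := by exact_mod_cast h1
  have g2 : (0 : ℝ) ≤ d2 := by exact_mod_cast h2
  have g3 : (0 : ℝ) ≤ d3 := by exact_mod_cast h3
  have key := hP.sum_mem (t := Finset.univ)
    (w := ![(d1 : ℝ) / (d1 + d2 + d3), (d2 : ℝ) / (d1 + d2 + d3), (d3 : ℝ) / (d1 + d2 + d3)])
    (z := ![toR2 a, toR2 b, toR2 c])
    (by intro i _; fin_cases i <;> simp <;> positivity)
    (by simp [Fin.sum_univ_three]; field_simp)
    (by intro i _; fin_cases i <;> simp <;> assumption)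
  rw [e]
  simpa [Fin.sum_univ_three] using key

/-- For fixed `n`, there are only finitely many convex lattice polytopes in `ℝ²` containing
exactly `n` lattice points, up to affine unimodular equivalence. -/
theorem finitely_many_polytopes_up_to_equiv (n : ℕ) (hn : 0 < n) :
    ∃ 𝒮 : Set (Set (Fin 2 → ℝ)), 𝒮.Finite ∧ (∀ P ∈ 𝒮, IsConvexLatticePolytope P) ∧
      ∀ P : Set (Fin 2 → ℝ), IsConvexLatticePolytope P →
        {q : Fin 2 → ℤ | toR2 q ∈ P}.ncard = n →
        ∃ P' ∈ 𝒮, ∃ (A : Matrix (Fin 2) (Fin 2) ℤ) (b : Fin 2 → ℤ),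
          IsUnit A.det ∧ unimodMap A b '' P' = P := by
  classical
  set N : ℤ := 3 ^ n + 3 ^ n * 3 ^ n with hN
  let B : Finset (Fin 2 → ℤ) := Fintype.piFinset fun _ => Finset.Icc (-N) N
  refine ⟨(fun S : Finset (Fin 2 → ℤ) => convexHull ℝ (toR2 '' (S : Set (Fin 2 → ℤ)))) ''
    {S | S ⊆ B ∧ S.Nonempty}, ?_, ?_, ?_⟩
  · apply Set.Finite.image
    apply B.powerset.finite_toSet.subset
    intro S hS
    simpa using hS.1
  · rintro _ ⟨S, hS, rfl⟩
    exact ⟨S, hS.2, rfl⟩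
  · rintro P ⟨S, hS, hPS⟩ hcard
    have hfin : {q : Fin 2 → ℤ | toR2 q ∈ P}.Finite :=
      Set.finite_of_ncard_pos (by omega)
    have hLc : hfin.toFinset.card = n := by
      rw [← Set.ncard_eq_toFinset_card _ hfin]; exact hcard
    have hmem : ∀ q, q ∈ hfin.toFinset ↔ toR2 q ∈ P := fun q => by simp
    have hSL : ∀ q ∈ S, q ∈ hfin.toFinset := fun q hq => by
      rw [hmem, hPS]
      exact subset_convexHull ℝ _ ⟨q, hq, rfl⟩
    have hconv : LatConv hfin.toFinset :=
      latConv_of_convex P (by rw [hPS]; exact convex_convexHull ℝ _) _ hmem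
    obtain ⟨α, β, γ, δ, a, hdet, hp⟩ := reduce hfin.toFinset
      (by obtain ⟨q, hq⟩ := hS; exact ⟨q, hSL q hq⟩) hconv
    rw [hLc, ← hN] at hp
    have him : (fun q => (!![α, β; γ, δ] : Matrix (Fin 2) (Fin 2) ℤ).mulVec q + a) ''
        ((B.filter fun q => (!![α, β; γ, δ] : Matrix (Fin 2) (Fin 2) ℤ).mulVec q + a ∈ S :
          Finset (Fin 2 → ℤ)) : Set (Fin 2 → ℤ)) = S := by
      ext p
      constructor
      · rintro ⟨q, hq, rfl⟩
        simp only [Finset.coe_filter, Set.mem_ofPred_eq] at hq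
        exact hq.2
      · intro hpS
        obtain ⟨X, Y, hX, hY, e0, e1⟩ := hp p (hSL p hpS)
        have e : (!![α, β; γ, δ] : Matrix (Fin 2) (Fin 2) ℤ).mulVec ![X, Y] + a = p := by
          ext i
          fin_cases i
          · simp [e0]; ring
          · simp [e1]; ring
        refine ⟨![X, Y], ?_, e⟩
        simp only [Finset.coe_filter, Set.mem_ofPred_eq]
        refine ⟨?_, by rw [e]; exact hpS⟩
        rw [Fintype.mem_piFinset]
        intro i
        rw [Finset.mem_Icc]
        fin_cases i
        · exact abs_le.1 hX
        · exact abs_le.1 hY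
    refine ⟨_, ⟨B.filter fun q => (!![α, β; γ, δ] : Matrix (Fin 2) (Fin 2) ℤ).mulVec q + a ∈ S,
      ⟨Finset.filter_subset _ _, ?_⟩, rfl⟩, !![α, β; γ, δ], a, ?_, ?_⟩
    · have : (S : Set (Fin 2 → ℤ)).Nonempty := hS
      rw [← him] at this
      exact Finset.coe_nonempty.1 this.of_image
    · rw [Matrix.det_fin_two_of, hdet]; exact isUnit_one
    · rw [unimodMap_image_hull, hPS, Set.image_image]
      simp only [unimodMap_toR2]
      conv_rhs => rw [← him, Set.image_image]
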